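/- (Browder's fixpoint theorem, as used in the paper.) Let D be a nonempty compact convex subset of ℝ^d and let H : [0,1] × D → D be continuous. Then there exists a connected subset P of { (t,x) ∈ [0,1] × D : H(t,x) = x } that contains a point of the form (0, x₀) and a point of the form (1, x₁); in particular x₀ is a fixpoint of H(0,·) and x₁ is a fixpoint of H(1,·). -/

import Mathlib

/-!
The fixpoint pairs form a compact set `S`. If no connected subset of `S` meets both the level
`t = 0` and the level `t = 1`, then `S` splits into disjoint closed sets `C₀` and `C₁` containing
these two levels, and Urysohn's lemma gives `φ : [0,1] × D → [0,1]` equal to `1` on `C₀` and to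
`0` on `C₁`. Brouwer's theorem provides a fixpoint of `(t, x) ↦ (φ (t, x), H (t, x))`; it lies in
`S` and satisfies `φ (t, x) = t`, which is absurd on either piece.

Brouwer's theorem follows from the absence of a `C¹` retraction `r` of the ball onto the sphere
(Milnor, Rogers). The map `x ↦ x + t • (r x - x)` permutes the open ball for small `t > 0`, so
the integral of its Jacobian determinant is the volume of the ball. That integral is a polynomial
in `t`, so the same holds at `t = 1`, where the determinant vanishes because `r` takes values in
the sphere.
-/

open Filter Function Metric MeasureTheory Polynomial Set Topology
open scoped NNReal unitInterval

/-! ### Metric projections onto convex sets -/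

section MetricProjection

variable {E : Type*} [NormedAddCommGroup E] [InnerProductSpace ℝ E] {K : Set E} {p : E → E} {x : E}

/-- `p` is the nearest-point projection onto the convex set `K`, encoded by its variational
characterization: the angle at `p x` between `x` and any point of `K` is obtuse. -/
structure IsMetricProjection (K : Set E) (p : E → E) : Prop where
  mem : ∀ x, p x ∈ K
  inner_sub_sub_nonpos : ∀ x, ∀ w ∈ K, inner ℝ (x - p x) (w - p x) ≤ 0

theorem exists_isMetricProjection (hne : K.Nonempty) (hK : IsComplete K) (hc : Convex ℝ K) :
    ∃ p, IsMetricProjection K p := by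
  choose p hpK hp using exists_norm_eq_iInf_of_complete_convex hne hK hc
  exact ⟨p, hpK, fun x => (norm_eq_iInf_iff_real_inner_le_zero hc (hpK x)).1 (hp x)⟩

namespace IsMetricProjection

theorem lipschitzWith (hp : IsMetricProjection K p) : LipschitzWith 1 p := by
  refine LipschitzWith.mk_one fun x y => ?_
  rw [dist_eq_norm, dist_eq_norm]
  have hxy := hp.inner_sub_sub_nonpos x (p y) (hp.mem y)
  have hyx := hp.inner_sub_sub_nonpos y (p x) (hp.mem x)
  have key : ‖p x - p y‖ * ‖p x - p y‖ ≤ ‖x - y‖ * ‖p x - p y‖ := calc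
    ‖p x - p y‖ * ‖p x - p y‖ = inner ℝ (p x - p y) (p x - p y) :=
      (real_inner_self_eq_norm_mul_norm _).symm
    _ = inner ℝ (x - y) (p x - p y) + inner ℝ (x - p x) (p y - p x)
        + inner ℝ (y - p y) (p x - p y) := by
      simp only [inner_sub_left, inner_sub_right]; ring
    _ ≤ inner ℝ (x - y) (p x - p y) := by linarith
    _ ≤ ‖x - y‖ * ‖p x - p y‖ := real_inner_le_norm _ _
  rcases (norm_nonneg (p x - p y)).eq_or_lt with h | h
  · exact h ▸ norm_nonneg _
  · exact le_of_mul_le_mul_right key h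

theorem eq_self_of_mem (hp : IsMetricProjection K p) (hx : x ∈ K) : p x = x := by
  have h := hp.inner_sub_sub_nonpos x x hx
  rw [real_inner_self_nonpos, sub_eq_zero] at h
  exact h.symm

theorem eq_self_of_mem_interior (hp : IsMetricProjection K p) (hx : p x ∈ interior K) :
    p x = x := by
  have hlim : Tendsto (fun s : ℝ => p x + s • (x - p x)) (𝓝[>] 0) (𝓝 (p x)) := by
    have : Continuous fun s : ℝ => p x + s • (x - p x) := by fun_prop
    simpa using (this.tendsto 0).mono_left nhdsWithin_le_nhds
  obtain ⟨s, hs, hs0⟩ :=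
    ((hlim.eventually (mem_interior_iff_mem_nhds.1 hx)).and self_mem_nhdsWithin).exists
  have h := hp.inner_sub_sub_nonpos x _ hs
  rw [add_sub_cancel_left, inner_smul_right] at h
  have h' : inner ℝ (x - p x) (x - p x) ≤ 0 := nonpos_of_mul_nonpos_right h hs0
  rw [real_inner_self_nonpos, sub_eq_zero] at h'
  exact h'.symm

end IsMetricProjection

end MetricProjection

/-! ### Small perturbations of the identity on a convex set -/

theorem bijective_id_add_of_lipschitzWith {E : Type*} [NormedAddCommGroup E] [CompleteSpace E]
    {g : E → E} {c : ℝ≥0} (hg : LipschitzWith c g) (hc : c < 1) :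
    Bijective fun x => x + g x := by
  refine (bijective_iff_existsUnique _).2 fun y => ?_
  have hcontr : ContractingWith c fun x => y - g x :=
    ⟨hc, LipschitzWith.of_dist_le_mul fun a b => by
      simpa only [dist_sub_left] using hg.dist_le_mul a b⟩
  refine ⟨hcontr.fixedPoint, ?_, fun x hx => hcontr.fixedPoint_unique ?_⟩
  · exact (eq_add_of_sub_eq hcontr.fixedPoint_isFixedPt).symm
  · exact sub_eq_of_eq_add (Eq.symm hx)

theorem bijOn_interior_id_add_smul {E : Type*} [NormedAddCommGroup E] [InnerProductSpace ℝ E]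
    [CompleteSpace E] {K : Set E} (hK : IsClosed K) (hconv : Convex ℝ K) {h : E → E} {L : ℝ≥0}
    (hL : LipschitzOnWith L h K) (hmaps : MapsTo (fun x => x + h x) K K)
    (hfix : ∀ x ∈ frontier K, h x = 0) {t : ℝ≥0} (ht : t < 1) (htL : t * L < 1) :
    BijOn (fun x => x + t • h x) (interior K) (interior K) := by
  rcases K.eq_empty_or_nonempty with rfl | hne
  · simp
  obtain ⟨p, hp⟩ := exists_isMetricProjection hne hK.isComplete hconv
  -- `h ∘ p` is a Lipschitz extension of `h` to the whole space.
  have hbij : Bijective fun x => x + t • h (p x) := by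
    refine bijective_id_add_of_lipschitzWith (LipschitzWith.of_dist_le_mul fun x y => ?_) htL
    calc dist (t • h (p x)) (t • h (p y)) = t * dist (h (p x)) (h (p y)) := by
          rw [NNReal.smul_def, NNReal.smul_def, dist_smul₀, Real.norm_of_nonneg t.coe_nonneg]
      _ ≤ t * (L * dist x y) := by
          gcongr
          refine (hL.dist_le_mul _ (hp.mem x) _ (hp.mem y)).trans ?_
          gcongr
          simpa using hp.lipschitzWith.dist_le_mul x y
      _ = (t * L : ℝ≥0) * dist x y := by push_cast; ring
  have heq : EqOn (fun x => x + t • h (p x)) (fun x => x + t • h x) (interior K) := fun x hx => by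
    simp only [hp.eq_self_of_mem (interior_subset hx)]
  refine ⟨fun x hx => ?_, hbij.injective.injOn.congr heq, fun y hy => ?_⟩
  · have hcombo : x + t • h x = (1 - t : ℝ) • x + (t : ℝ) • (x + h x) := by
      rw [NNReal.smul_def]; module
    change x + t • h x ∈ interior K
    rw [hcombo]
    exact hconv.combo_interior_self_mem_interior hx (hmaps (interior_subset hx))
      (sub_pos.2 (by exact_mod_cast ht)) t.2 (sub_add_cancel _ _)
  · obtain ⟨x, rfl⟩ := hbij.surjective y
    by_cases hpx : p x ∈ interior K
    · have hx : x ∈ interior K := hp.eq_self_of_mem_interior hpx ▸ hpx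
      exact ⟨x, hx, (heq hx).symm⟩
    · have hhp : h (p x) = 0 := hfix _ (hK.frontier_eq ▸ ⟨hp.mem x, hpx⟩)
      simp only [hhp, smul_zero, add_zero] at hy
      exact absurd ((hp.eq_self_of_mem (interior_subset hy)).symm ▸ hy) hpx

/-! ### Integrals of polynomials and of Jacobian determinants -/

theorem eval_eq_sum_eval_mul_eval_lagrangeBasis {F : Type*} [Field F] [DecidableEq F]
    {s : Finset F} {q : F[X]} (hq : q.degree < s.card) (a : F) :
    q.eval a = ∑ t ∈ s, q.eval t * (Lagrange.basis s id t).eval a := by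
  conv_lhs => rw [Lagrange.eq_interpolate (injOn_id _) hq]
  simp only [Lagrange.interpolate_apply, eval_finsetSum, eval_mul, eval_C, id]

theorem integral_eval_eq_of_infinite {α : Type*} [MeasurableSpace α] {μ : Measure α}
    {q : α → ℝ[X]} {n : ℕ} (hdeg : ∀ x, (q x).natDegree ≤ n) {c : ℝ}
    (hinf : {t | Integrable (fun x => (q x).eval t) μ ∧ ∫ x, (q x).eval t ∂μ = c}.Infinite)
    (a : ℝ) : ∫ x, (q x).eval a ∂μ = c := by
  obtain ⟨s, hs, hcard⟩ := hinf.exists_subset_card_eq (n + 1)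
  have hlag : ∀ r : ℝ[X], r.natDegree ≤ n →
      r.eval a = ∑ t ∈ s, r.eval t * (Lagrange.basis s id t).eval a := fun r hr =>
    eval_eq_sum_eval_mul_eval_lagrangeBasis ((degree_le_of_natDegree_le hr).trans_lt
      (by rw [hcard]; exact_mod_cast n.lt_succ_self)) a
  calc ∫ x, (q x).eval a ∂μ
      = ∫ x, ∑ t ∈ s, (q x).eval t * (Lagrange.basis s id t).eval a ∂μ :=
        integral_congr_ae (ae_of_all _ fun x => hlag _ (hdeg x))
    _ = ∑ t ∈ s, (∫ x, (q x).eval t ∂μ) * (Lagrange.basis s id t).eval a := by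
        rw [integral_finsetSum s fun t ht => (hs ht).1.mul_const _]
        simp only [integral_mul_const]
    _ = ∑ t ∈ s, (C c).eval t * (Lagrange.basis s id t).eval a :=
        Finset.sum_congr rfl fun t ht => by rw [(hs ht).2, eval_C]
    _ = c := by rw [← hlag (C c) (by simp), eval_C]

theorem exists_polynomial_eval_eq_det_one_add_smul {R M : Type*} [CommRing R] [Nontrivial R]
    [AddCommGroup M] [Module R M] [Module.Free R M] [Module.Finite R M] (A : Module.End R M) :
    ∃ q : R[X], q.natDegree ≤ Module.finrank R M ∧
      ∀ t : R, q.eval t = LinearMap.det (1 + t • A) := by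
  let b := Module.finBasis R M
  refine ⟨((X : R[X]) • (A.toMatrix b b).map C + (1 : Matrix _ _ R).map C).det, ?_, fun t => ?_⟩
  · simpa using natDegree_det_X_add_C_le (A.toMatrix b b) 1
  · rw [← LinearMap.det_toMatrix b, ← coe_evalRingHom, RingHom.map_det]
    congr 1
    ext i j
    simp only [coe_evalRingHom, RingHom.mapMatrix_apply, Matrix.map_apply, Matrix.add_apply,
      Matrix.smul_apply, Matrix.one_apply, smul_eq_mul, eval_mul, eval_X, eval_C, map_add,
      map_smul, LinearMap.toMatrix_one]
    exact add_comm _ _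

theorem eventually_det_one_add_pos (E : Type*) [NormedAddCommGroup E] [NormedSpace ℝ E] :
    ∀ᶠ B in 𝓝 (0 : E →L[ℝ] E), 0 < (1 + B).det := by
  have hcont : Continuous fun B : E →L[ℝ] E => (1 + B).det :=
    ContinuousLinearMap.continuous_det.comp (by fun_prop)
  have hone : (1 + (0 : E →L[ℝ] E)).det = 1 := by
    simp [ContinuousLinearMap.det, ContinuousLinearMap.one_def]
  exact (hcont.tendsto 0).eventually_const_lt (by rw [hone]; exact one_pos)

theorem integrableOn_det_and_setIntegral_det_eq_of_bijOn {E : Type*} [NormedAddCommGroup E]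
    [NormedSpace ℝ E] [FiniteDimensional ℝ E] [MeasurableSpace E] [BorelSpace E] (μ : Measure E)
    [μ.IsAddHaarMeasure] {s u : Set E} {f : E → E} {f' : E → E →L[ℝ] E} (hs : MeasurableSet s)
    (hf' : ∀ x ∈ s, HasFDerivWithinAt f (f' x) s x) (hbij : BijOn f s u)
    (hpos : ∀ x ∈ s, 0 < (f' x).det) (hu : μ u ≠ ⊤) :
    IntegrableOn (fun x => (f' x).det) s μ ∧ ∫ x in s, (f' x).det ∂μ = μ.real u := by
  have habs : EqOn (fun x => |(f' x).det| • (1 : ℝ)) (fun x => (f' x).det) s := fun x hx => by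
    simp [abs_of_pos (hpos x hx)]
  have hint := integrableOn_image_iff_integrableOn_abs_det_fderiv_smul μ hs hf' hbij.injOn
    fun _ => (1 : ℝ)
  have hval := integral_image_eq_integral_abs_det_fderiv_smul μ hs hf' hbij.injOn fun _ => (1 : ℝ)
  rw [hbij.image_eq, integrableOn_congr_fun habs hs] at hint
  rw [hbij.image_eq, setIntegral_congr_fun hs habs] at hval
  exact ⟨hint.1 (integrableOn_const hu), by simp [← hval]⟩

theorem exists_nnnorm_fderiv_le_and_lipschitzOnWith {E F : Type*} [NormedAddCommGroup E]
    [NormedSpace ℝ E] [NormedAddCommGroup F] [NormedSpace ℝ F] {K : Set E} (hK : IsCompact K)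
    (hconv : Convex ℝ K) {h : E → F} (hh : ∀ x ∈ K, ContDiffAt ℝ 1 h x) :
    ∃ L : ℝ≥0, (∀ x ∈ K, ‖fderiv ℝ h x‖₊ ≤ L) ∧ LipschitzOnWith L h K := by
  have hcont : ContinuousOn (fun x => ‖fderiv ℝ h x‖₊) K := fun x hx =>
    ((hh x hx).fderiv_right (m := 0) (by simp)).continuousAt.nnnorm.continuousWithinAt
  obtain ⟨L, hL⟩ := hK.bddAbove_image hcont
  have hbound : ∀ x ∈ K, ‖fderiv ℝ h x‖₊ ≤ L := fun x hx => hL (mem_image_of_mem _ hx)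
  exact ⟨L, hbound, hconv.lipschitzOnWith_of_nnnorm_fderiv_le
    (fun x hx => (hh x hx).differentiableAt one_ne_zero) hbound⟩

section Jacobian

variable {E : Type*} [NormedAddCommGroup E] [InnerProductSpace ℝ E] [FiniteDimensional ℝ E]
  [MeasurableSpace E] [BorelSpace E] (μ : Measure E) [μ.IsAddHaarMeasure]

theorem eventually_setIntegral_det_one_add_smul_fderiv_eq {K : Set E} (hK : IsCompact K)
    (hconv : Convex ℝ K) {h : E → E} (hh : ∀ x ∈ K, ContDiffAt ℝ 1 h x)
    (hmaps : MapsTo (fun x => x + h x) K K) (hfix : ∀ x ∈ frontier K, h x = 0) :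
    ∀ᶠ t : ℝ in 𝓝[>] 0, IntegrableOn (fun x => (1 + t • fderiv ℝ h x).det) (interior K) μ ∧
      ∫ x in interior K, (1 + t • fderiv ℝ h x).det ∂μ = μ.real (interior K) := by
  obtain ⟨L, hbound, hL⟩ := exists_nnnorm_fderiv_le_and_lipschitzOnWith hK hconv hh
  obtain ⟨δ, hδ, hdet⟩ := Metric.eventually_nhds_iff.1 (eventually_det_one_add_pos E)
  have hsmall : ∀ c : ℝ, 0 < c → ∀ M : ℝ, ∀ᶠ t : ℝ in 𝓝[>] 0, t * M < c := fun c hc M =>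
    nhdsWithin_le_nhds <|
      ((continuous_mul_const M).tendsto' 0 0 (zero_mul M)).eventually_lt_const hc
  filter_upwards [self_mem_nhdsWithin, hsmall 1 one_pos 1, hsmall 1 one_pos L, hsmall δ hδ L]
    with t ht0 ht1 htL htδ
  lift t to ℝ≥0 using (mem_Ioi.1 ht0).le
  refine integrableOn_det_and_setIntegral_det_eq_of_bijOn μ isOpen_interior.measurableSet
    (f := fun x => x + (t : ℝ) • h x) (fun x hx => ?_)
    (bijOn_interior_id_add_smul hK.isClosed hconv hL hmaps hfix
      (by simpa using ht1) (by exact_mod_cast htL)) (fun x hx => ?_)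
    ((measure_mono interior_subset).trans_lt hK.measure_lt_top).ne
  · have hd := ((hh x (interior_subset hx)).differentiableAt one_ne_zero).hasFDerivAt
    exact ((hasFDerivAt_id x).add (hd.const_smul (t : ℝ))).hasFDerivWithinAt
  · refine hdet ?_
    rw [dist_zero_right, norm_smul, Real.norm_of_nonneg t.coe_nonneg]
    have hnorm : ‖fderiv ℝ h x‖ ≤ L := hbound x (interior_subset hx)
    exact (mul_le_mul_of_nonneg_left hnorm t.coe_nonneg).trans_lt htδ

theorem setIntegral_det_fderiv_eq_of_eqOn_frontier {K : Set E} (hK : IsCompact K)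
    (hconv : Convex ℝ K) {r : E → E} (hr : ∀ x ∈ K, ContDiffAt ℝ 1 r x) (hmaps : MapsTo r K K)
    (hfix : EqOn r id (frontier K)) :
    ∫ x in interior K, (fderiv ℝ r x).det ∂μ = μ.real (interior K) := by
  let h : E → E := fun x => r x - x
  have hfderiv : ∀ x ∈ interior K, fderiv ℝ r x = 1 + fderiv ℝ h x := fun x hx => by
    have hd := (hr x (interior_subset hx)).differentiableAt one_ne_zero
    rw [fderiv_fun_sub hd differentiableAt_fun_id, fderiv_fun_id]
    exact (add_sub_cancel _ _).symm
  have hsmall := eventually_setIntegral_det_one_add_smul_fderiv_eq μ hK hconv (h := h)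
    (fun x hx => (hr x hx).sub contDiffAt_id) (fun x hx => by simpa [h] using hmaps hx)
    (fun x hx => sub_eq_zero.2 (hfix hx))
  choose q hdeg hq using fun x =>
    exists_polynomial_eval_eq_det_one_add_smul (fderiv ℝ h x : E →ₗ[ℝ] E)
  have hq' : ∀ t x, (q x).eval t = (1 + t • fderiv ℝ h x).det := fun t x => hq x t
  simp only [← hq'] at hsmall
  have hinf := frequently_cofinite_iff_infinite.1 <|
    hsmall.frequently.filter_mono ((nhdsGT_le_nhdsNE 0).trans (nhdsNE_le_cofinite 0))
  rw [← integral_eval_eq_of_infinite hdeg hinf 1]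
  exact setIntegral_congr_fun isOpen_interior.measurableSet fun x hx => by
    simp only [hfderiv x hx, hq', one_smul]

end Jacobian

/-! ### Brouwer's fixed point theorem -/

section Retraction

variable {E : Type*} [NormedAddCommGroup E] [InnerProductSpace ℝ E]

theorem det_eq_zero_of_eventually_norm_eq [FiniteDimensional ℝ E] {f : E → E} {f' : E →L[ℝ] E}
    {x : E} {c : ℝ} (hf : HasFDerivAt f f' x) (hc : ∀ᶠ y in 𝓝 x, ‖f y‖ = c) (hx : f x ≠ 0) :
    f'.det = 0 := by
  by_contra hdet
  obtain ⟨v, hv⟩ : ∃ v, f' v = f x := (LinearMap.equivOfDetNeZero _ hdet).surjective (f x)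
  have hconst : HasFDerivAt (fun y => ‖f y‖ ^ 2) (0 : E →L[ℝ] ℝ) x :=
    (hasFDerivAt_const (c ^ 2) x).congr_of_eventuallyEq (hc.mono fun y hy => by simp only [hy])
  have hzero := congrArg (fun A : E →L[ℝ] ℝ => A v) (hf.norm_sq.unique hconst)
  simp [hv, hx] at hzero

theorem not_exists_contDiffAt_retraction_sphere [FiniteDimensional ℝ E] :
    ¬ ∃ r : E → E, (∀ x ∈ closedBall 0 1, ContDiffAt ℝ 1 r x) ∧
      MapsTo r (closedBall 0 1) (sphere 0 1) ∧ EqOn r id (sphere 0 1) := by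
  rintro ⟨r, hr, hmaps, hfix⟩
  borelize E
  have hvol := setIntegral_det_fderiv_eq_of_eqOn_frontier volume
    (isCompact_closedBall (0 : E) 1) (convex_closedBall 0 1) hr
    (fun x hx => sphere_subset_closedBall (hmaps hx)) (by rwa [frontier_closedBall _ one_ne_zero])
  rw [interior_closedBall _ one_ne_zero] at hvol
  have hdet : ∀ x ∈ ball (0 : E) 1, (fderiv ℝ r x).det = 0 := fun x hx => by
    have hnorm : ∀ y ∈ ball (0 : E) 1, ‖r y‖ = 1 := fun y hy =>
      mem_sphere_zero_iff_norm.1 (hmaps (ball_subset_closedBall hy))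
    exact det_eq_zero_of_eventually_norm_eq
      ((hr x (ball_subset_closedBall hx)).differentiableAt one_ne_zero).hasFDerivAt
      (eventually_of_mem (isOpen_ball.mem_nhds hx) hnorm)
      (norm_ne_zero_iff.1 (by simp [hnorm x hx]))
  rw [setIntegral_congr_fun measurableSet_ball hdet, integral_zero] at hvol
  exact (ENNReal.toReal_pos (measure_ball_pos volume (0 : E) one_pos).ne'
    measure_ball_lt_top.ne).ne hvol

/-- The quarter discriminant of `‖x + s • u‖ ^ 2 = 1`, a quadratic equation in `s`. -/
noncomputable def rayDiscr (x u : E) : ℝ := inner ℝ x u ^ 2 + ‖u‖ ^ 2 * (1 - ‖x‖ ^ 2)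

/-- The point where the ray from `x` in direction `u` leaves the closed unit ball, obtained from
the larger root `s` of `‖x + s • u‖ ^ 2 = 1`; it is meaningful for `‖x‖ ≤ 1` and `u ≠ 0`. -/
noncomputable def rayExit (x u : E) : E :=
  x + ((-inner ℝ x u + √(rayDiscr x u)) / ‖u‖ ^ 2) • u

theorem norm_rayExit {x u : E} (hu : u ≠ 0) (hΔ : 0 ≤ rayDiscr x u) : ‖rayExit x u‖ = 1 := by
  have hsqrt := Real.sq_sqrt hΔ
  have hu' : ‖u‖ ≠ 0 := norm_ne_zero_iff.2 hu
  rw [← sq_eq_sq₀ (norm_nonneg _) zero_le_one, rayExit, norm_add_sq_real, inner_smul_right,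
    norm_smul, mul_pow, Real.norm_eq_abs, sq_abs]
  set a := √(rayDiscr x u)
  rw [rayDiscr] at hsqrt
  field_simp
  linear_combination hsqrt

theorem rayExit_eq_self {x u : E} (hx : ‖x‖ = 1) (hxu : 0 ≤ inner ℝ x u) : rayExit x u = x := by
  simp [rayExit, rayDiscr, hx, Real.sqrt_sq hxu]

theorem inner_sub_pos_of_norm_le {x y : E} (hyx : ‖y‖ ≤ ‖x‖) (hne : y ≠ x) :
    0 < inner ℝ x (x - y) := by
  have hpos : 0 < ‖x - y‖ := norm_sub_pos_iff.2 hne.symm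
  have hexp := norm_sub_sq_real x y
  rw [inner_sub_right, real_inner_self_eq_norm_sq]
  nlinarith [norm_nonneg y]

theorem rayDiscr_sub_pos {x y : E} (hx : ‖x‖ ≤ 1) (hy : ‖y‖ ≤ 1) (hne : y ≠ x) :
    0 < rayDiscr x (x - y) := by
  rcases hx.eq_or_lt with hx | hx
  · have := inner_sub_pos_of_norm_le (hy.trans_eq hx.symm) hne
    simp only [rayDiscr, hx]
    positivity
  · have hpos : 0 < ‖x - y‖ := norm_sub_pos_iff.2 hne.symm
    have hx' : 0 < 1 - ‖x‖ ^ 2 := by nlinarith [norm_nonneg x]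
    rw [rayDiscr]
    positivity

theorem contDiffAt_rayExit {F : Type*} [NormedAddCommGroup F] [NormedSpace ℝ F]
    {n : WithTop ℕ∞} {f g : F → E} {z : F} (hf : ContDiffAt ℝ n f z) (hg : ContDiffAt ℝ n g z)
    (hgz : g z ≠ 0) (hΔ : rayDiscr (f z) (g z) ≠ 0) :
    ContDiffAt ℝ n (fun y => rayExit (f y) (g y)) z := by
  have hdiscr : ContDiffAt ℝ n (fun y => rayDiscr (f y) (g y)) z :=
    ((hf.inner ℝ hg).pow 2).add ((hg.norm_sq ℝ).mul (contDiffAt_const.sub (hf.norm_sq ℝ)))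
  exact hf.add ((((hf.inner ℝ hg).neg.add (hdiscr.sqrt hΔ)).div (hg.norm_sq ℝ)
    (pow_ne_zero 2 (norm_ne_zero_iff.2 hgz))).smul hg)

theorem exists_contDiffAt_retraction_sphere_of_forall_ne {g : E → E} (hg : ContDiff ℝ 1 g)
    (hg1 : ∀ x, ‖g x‖ ≤ 1) (hne : ∀ x, g x ≠ x) :
    ∃ r : E → E, (∀ x ∈ closedBall 0 1, ContDiffAt ℝ 1 r x) ∧
      MapsTo r (closedBall 0 1) (sphere 0 1) ∧ EqOn r id (sphere 0 1) := by
  have hsub : ∀ x, x - g x ≠ 0 := fun x => sub_ne_zero.2 (hne x).symm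
  have hΔ : ∀ x ∈ closedBall (0 : E) 1, 0 < rayDiscr x (x - g x) := fun x hx =>
    rayDiscr_sub_pos (mem_closedBall_zero_iff.1 hx) (hg1 x) (hne x)
  refine ⟨fun x => rayExit x (x - g x), fun x hx => ?_, fun x hx => ?_, fun x hx => ?_⟩
  · exact contDiffAt_rayExit contDiffAt_id (contDiffAt_id.sub hg.contDiffAt) (hsub x) (hΔ x hx).ne'
  · exact mem_sphere_zero_iff_norm.2 (norm_rayExit (hsub x) (hΔ x hx).le)
  · have hx1 : ‖x‖ = 1 := mem_sphere_zero_iff_norm.1 hx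
    exact rayExit_eq_self hx1 (inner_sub_pos_of_norm_le (hx1 ▸ hg1 x) (hne x)).le

end Retraction

theorem exists_contDiff_mem_convex_forall_ne {E : Type*} [NormedAddCommGroup E]
    [NormedSpace ℝ E] [FiniteDimensional ℝ E] {f : E → E} (hf : Continuous f) {K : Set E}
    (hK : Convex ℝ K) (hfK : ∀ x, f x ∈ K) (hne : ∀ x, f x ≠ x) :
    ∃ g : E → E, ContDiff ℝ 1 g ∧ (∀ x, g x ∈ K) ∧ ∀ x, g x ≠ x := by
  -- The set allowed for the value at `y` excludes `y` itself.
  obtain ⟨g, hg⟩ := exists_contMDiffMap_forall_mem_convex_of_local_const (n := 1)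
    (modelWithCornersSelf ℝ E) (t := fun y => ball (f y) (dist (f y) y) ∩ K)
    (fun y => (convex_ball _ _).inter hK) fun x => ⟨f x, by
      have hnear : ∀ᶠ y in 𝓝 x, dist (f x) (f y) < dist (f y) y :=
        ContinuousAt.eventually_lt (by fun_prop) (by fun_prop) (by simpa using hne x)
      filter_upwards [hnear] with y hy using ⟨hy, hfK x⟩⟩
  refine ⟨g, g.contMDiff.contDiff, fun x => (hg x).2, fun x hx => ?_⟩
  have hmem := (hg x).1
  rw [hx, mem_ball, dist_comm] at hmem
  exact lt_irrefl _ hmem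

/-- The fixed point property of a topological space: every continuous self-map has a fixed point. -/
def HasFixedPointProperty (X : Type*) [TopologicalSpace X] : Prop :=
  ∀ f : C(X, X), ∃ x, f x = x

namespace HasFixedPointProperty

variable {X Y : Type*} [TopologicalSpace X] [TopologicalSpace Y]

theorem of_leftInverse (hX : HasFixedPointProperty X) (i : C(Y, X)) (r : C(X, Y))
    (hri : LeftInverse r i) : HasFixedPointProperty Y := fun f => by
  obtain ⟨x, hx⟩ := hX ((i.comp f).comp r)
  have hx' : i (f (r x)) = x := hx
  exact ⟨r x, by rw [← hri (f (r x)), hx']⟩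

theorem of_homeomorph (hX : HasFixedPointProperty X) (e : Y ≃ₜ X) : HasFixedPointProperty Y :=
  hX.of_leftInverse e e.symm e.left_inv

end HasFixedPointProperty

theorem hasFixedPointProperty_closedBall {E : Type*} [NormedAddCommGroup E]
    [InnerProductSpace ℝ E] [FiniteDimensional ℝ E] :
    HasFixedPointProperty (closedBall (0 : E) 1) := fun f => by
  obtain ⟨p, hp⟩ := exists_isMetricProjection (nonempty_closedBall.2 zero_le_one)
    (isClosed_closedBall (x := (0 : E)) (ε := 1)).isComplete (convex_closedBall 0 1)
  let F : E → E := fun x => f ⟨p x, hp.mem x⟩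
  have hF : Continuous F :=
    continuous_subtype_val.comp (f.continuous.comp (hp.lipschitzWith.continuous.subtype_mk _))
  obtain ⟨x, hx⟩ : ∃ x, F x = x := by
    by_contra! hne
    obtain ⟨g, hg, hgK, hgne⟩ := exists_contDiff_mem_convex_forall_ne hF (convex_closedBall 0 1)
      (fun x => (f ⟨p x, hp.mem x⟩).2) hne
    exact not_exists_contDiffAt_retraction_sphere
      (exists_contDiffAt_retraction_sphere_of_forall_ne hg
        (fun x => mem_closedBall_zero_iff.1 (hgK x)) hgne)
  refine ⟨⟨p x, hp.mem x⟩, Subtype.ext ?_⟩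
  change F x = p x
  rw [hp.eq_self_of_mem (hx ▸ (f ⟨p x, hp.mem x⟩).2), hx]

theorem hasFixedPointProperty_of_convex_of_innerProductSpace {E : Type*} [NormedAddCommGroup E]
    [InnerProductSpace ℝ E] [FiniteDimensional ℝ E] {K : Set E} (hne : K.Nonempty)
    (hK : IsCompact K) (hconv : Convex ℝ K) : HasFixedPointProperty K := by
  obtain ⟨p, hp⟩ := exists_isMetricProjection hne hK.isComplete hconv
  obtain ⟨R, hR0, hR⟩ := hK.isBounded.exists_pos_norm_le
  have hmem : ∀ x : K, R⁻¹ • (x : E) ∈ closedBall (0 : E) 1 := fun x => by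
    rw [mem_closedBall_zero_iff, norm_smul, norm_inv, Real.norm_of_nonneg hR0.le,
      inv_mul_le_one₀ hR0]
    exact hR x x.2
  have hpcont : Continuous p := hp.lipschitzWith.continuous
  refine hasFixedPointProperty_closedBall.of_leftInverse (X := closedBall (0 : E) 1)
    ⟨fun x => ⟨R⁻¹ • (x : E), hmem x⟩, by fun_prop⟩
    ⟨fun y => ⟨p (R • (y : E)), hp.mem _⟩, by fun_prop⟩ fun x => Subtype.ext ?_
  simp only [ContinuousMap.coe_mk, smul_inv_smul₀ hR0.ne', hp.eq_self_of_mem x.2]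

theorem hasFixedPointProperty_of_convex {V : Type*} [AddCommGroup V] [TopologicalSpace V]
    [IsTopologicalAddGroup V] [T2Space V] [Module ℝ V] [ContinuousSMul ℝ V]
    [FiniteDimensional ℝ V] {K : Set V} (hne : K.Nonempty) (hK : IsCompact K)
    (hconv : Convex ℝ K) : HasFixedPointProperty K := by
  let e := toEuclidean (E := V)
  exact (hasFixedPointProperty_of_convex_of_innerProductSpace (hne.image e)
    (hK.image e.continuous) (hconv.linear_image e.toLinearEquiv.toLinearMap)).of_homeomorph
      (e.toHomeomorph.image K)

/-! ### Continua of fixed points -/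

theorem exists_isClopen_of_disjoint_connectedComponent {X : Type*} [TopologicalSpace X]
    [CompactSpace X] [T2Space X] {A B : Set X} (hA : IsClosed A) (hB : IsClosed B)
    (hAB : ∀ a ∈ A, Disjoint (connectedComponent a) B) :
    ∃ C, IsClopen C ∧ A ⊆ C ∧ Disjoint C B := by
  have hcoe := ConnectedComponents.continuous_coe (α := X)
  have hclosed : ∀ T : Set X, IsClosed T → IsClosed ((↑) '' T : Set (ConnectedComponents X)) :=
    fun T hT => (hT.isCompact.image hcoe).isClosed
  obtain ⟨C, hC, hAC, hCB⟩ :=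
    exists_clopen_of_closed_subset_open (hclosed A hA) (hclosed B hB).isOpen_compl <| by
      rintro _ ⟨a, ha, rfl⟩ ⟨b, hb, hab⟩
      exact disjoint_left.1 (hAB a ha) (ConnectedComponents.coe_eq_coe'.1 hab) hb
  exact ⟨(↑) ⁻¹' C, hC.preimage hcoe, fun a ha => hAC (mem_image_of_mem _ ha),
    disjoint_left.2 fun b hb hbB => hCB hb (mem_image_of_mem _ hbB)⟩

theorem exists_isConnected_or_exists_disjoint_isClosed {X : Type*} [TopologicalSpace X]
    [T2Space X] {S A B : Set X} (hS : IsCompact S) (hA : IsClosed A) (hB : IsClosed B) :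
    (∃ P ⊆ S, IsConnected P ∧ (P ∩ A).Nonempty ∧ (P ∩ B).Nonempty) ∨
      ∃ C₀ C₁, IsClosed C₀ ∧ IsClosed C₁ ∧ Disjoint C₀ C₁ ∧ C₀ ∪ C₁ = S ∧
        S ∩ A ⊆ C₀ ∧ S ∩ B ⊆ C₁ := by
  have : CompactSpace S := isCompact_iff_compactSpace.1 hS
  by_cases hconn : ∀ a ∈ ((↑) ⁻¹' A : Set S), Disjoint (connectedComponent a) ((↑) ⁻¹' B)
  · right
    obtain ⟨C, hC, hAC, hCB⟩ := exists_isClopen_of_disjoint_connectedComponent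
      (hA.preimage continuous_subtype_val) (hB.preimage continuous_subtype_val) hconn
    have hclosed : ∀ T : Set S, IsClosed T → IsClosed ((↑) '' T : Set X) := fun T hT =>
      (hT.isCompact.image continuous_subtype_val).isClosed
    refine ⟨(↑) '' C, (↑) '' Cᶜ, hclosed C hC.isClosed, hclosed Cᶜ hC.compl.isClosed,
      (disjoint_image_iff Subtype.val_injective).2 disjoint_compl_right, ?_, ?_, ?_⟩
    · rw [← image_union, union_compl_self, image_univ, Subtype.range_coe]
    · rintro x ⟨hxS, hxA⟩
      exact ⟨⟨x, hxS⟩, hAC hxA, rfl⟩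
    · rintro x ⟨hxS, hxB⟩
      exact ⟨⟨x, hxS⟩, fun hxC => disjoint_left.1 hCB hxC hxB, rfl⟩
  · left
    push Not at hconn
    obtain ⟨a, ha, hmeet⟩ := hconn
    obtain ⟨b, hab, hb⟩ := not_disjoint_iff.1 hmeet
    exact ⟨(↑) '' connectedComponent a, Subtype.coe_image_subset _ _,
      isConnected_connectedComponent.image _ continuous_subtype_val.continuousOn,
      ⟨a, mem_image_of_mem _ mem_connectedComponent, ha⟩, ⟨b, mem_image_of_mem _ hab, hb⟩⟩

theorem HasFixedPointProperty.exists_isConnected_fixedPoints {X : Type*} [TopologicalSpace X]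
    [CompactSpace X] [T2Space X] (hX : HasFixedPointProperty (I × X)) (H : C(I × X, X)) :
    ∃ P ⊆ {p | H p = p.2}, IsConnected P ∧ (∃ x, (0, x) ∈ P) ∧ ∃ x, (1, x) ∈ P := by
  have hclosed : IsClosed {p | H p = p.2} := isClosed_eq H.continuous continuous_snd
  have hlevel : ∀ t : I, IsClosed {p : I × X | p.1 = t} := fun t =>
    isClosed_eq continuous_fst continuous_const
  rcases exists_isConnected_or_exists_disjoint_isClosed hclosed.isCompact (hlevel 0) (hlevel 1) with
    ⟨P, hPS, hP, ⟨⟨_, x₀⟩, hx₀, rfl⟩, ⟨⟨_, x₁⟩, hx₁, rfl⟩⟩ |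
    ⟨C₀, C₁, hC₀, hC₁, hdisj, hunion, hsub₀, hsub₁⟩
  · exact ⟨P, hPS, hP, ⟨x₀, hx₀⟩, ⟨x₁, hx₁⟩⟩
  · obtain ⟨φ, hφ₁, hφ₀, hφ⟩ := exists_continuous_zero_one_of_isClosed hC₁ hC₀ hdisj.symm
    obtain ⟨p, hp⟩ := hX ((⟨fun p => ⟨φ p, hφ p⟩, by fun_prop⟩ : C(I × X, I)).prodMk H)
    have hφp : φ p = p.1 := congrArg (fun q : I × X => (q.1 : ℝ)) hp
    have hpS : p ∈ {p | H p = p.2} := congrArg Prod.snd hp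
    exfalso
    rcases (hunion ▸ hpS : p ∈ C₀ ∪ C₁) with hpC | hpC
    · have hp1 : p.1 = 1 := Subtype.ext (hφp.symm.trans (hφ₀ hpC))
      exact disjoint_left.1 hdisj hpC (hsub₁ ⟨hpS, hp1⟩)
    · have hp0 : p.1 = 0 := Subtype.ext (hφp.symm.trans (hφ₁ hpC))
      exact disjoint_left.1 hdisj (hsub₀ ⟨hpS, hp0⟩) hpC

theorem browder_fixpoint_general {V : Type*} [AddCommGroup V] [TopologicalSpace V]
    [IsTopologicalAddGroup V] [T2Space V] [Module ℝ V] [ContinuousSMul ℝ V]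
    [FiniteDimensional ℝ V] {D : Set V} (hne : D.Nonempty) (hcomp : IsCompact D)
    (hconv : Convex ℝ D) {H : ℝ × V → V} (hcont : ContinuousOn H (Icc (0 : ℝ) 1 ×ˢ D))
    (hmaps : MapsTo H (Icc (0 : ℝ) 1 ×ˢ D) D) :
    ∃ P : Set (ℝ × V), P ⊆ {p ∈ Icc (0 : ℝ) 1 ×ˢ D | H p = p.2} ∧ IsConnected P ∧
      (∃ x₀ ∈ D, (0, x₀) ∈ P ∧ H (0, x₀) = x₀) ∧ (∃ x₁ ∈ D, (1, x₁) ∈ P ∧ H (1, x₁) = x₁) := by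
  have : CompactSpace D := isCompact_iff_compactSpace.1 hcomp
  have hfix : HasFixedPointProperty (I × D) :=
    (hasFixedPointProperty_of_convex ((nonempty_Icc.2 zero_le_one).prod hne)
      (isCompact_Icc.prod hcomp) ((convex_Icc 0 1).prod hconv)).of_homeomorph
        (Homeomorph.Set.prod I D).symm
  let i : I × D → ℝ × V := Prod.map (↑) (↑)
  have hi : Continuous i := by fun_prop
  have hiK : ∀ p, i p ∈ Icc (0 : ℝ) 1 ×ˢ D := fun p => ⟨p.1.2, p.2.2⟩
  obtain ⟨P, hP, hPconn, ⟨x₀, hx₀⟩, ⟨x₁, hx₁⟩⟩ := hfix.exists_isConnected_fixedPoints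
    ⟨fun p => ⟨H (i p), hmaps (hiK p)⟩, (hcont.comp_continuous hi hiK).subtype_mk _⟩
  have hHi : ∀ p ∈ P, H (i p) = (i p).2 := fun p hp => congrArg Subtype.val (hP hp)
  refine ⟨i '' P, image_subset_iff.2 fun p hp => ⟨hiK p, hHi p hp⟩,
    hPconn.image i hi.continuousOn, ⟨x₀, x₀.2, ⟨_, hx₀, rfl⟩, hHi _ hx₀⟩,
    ⟨x₁, x₁.2, ⟨_, hx₁, rfl⟩, hHi _ hx₁⟩⟩

/-- Browder's fixpoint theorem: for a nonempty compact convex D ⊆ ℝ^d and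
a continuous H : [0,1] × D → D, there is a connected set of fixpoint pairs
(t, x) with H(t,x) = x containing points at levels t = 0 and t = 1. -/
theorem browder_fixpoint (d : ℕ) (D : Set (EuclideanSpace ℝ (Fin d)))
    (hne : D.Nonempty) (hcomp : IsCompact D) (hconv : Convex ℝ D)
    (H : ℝ × EuclideanSpace ℝ (Fin d) → EuclideanSpace ℝ (Fin d))
    (hcont : ContinuousOn H (Set.Icc (0 : ℝ) 1 ×ˢ D))
    (hmaps : Set.MapsTo H (Set.Icc (0 : ℝ) 1 ×ˢ D) D) :
    ∃ P : Set (ℝ × EuclideanSpace ℝ (Fin d)),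
      P ⊆ {p ∈ Set.Icc (0 : ℝ) 1 ×ˢ D | H p = p.2} ∧
      IsConnected P ∧
      (∃ x₀ ∈ D, (0, x₀) ∈ P ∧ H (0, x₀) = x₀) ∧
      (∃ x₁ ∈ D, (1, x₁) ∈ P ∧ H (1, x₁) = x₁) := by
  exact browder_fixpoint_general hne hcomp hconv hcont hmaps
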